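/- Let k be a field of characteristic 0 and v ∈ ℕⁿ. The graph monomials m_Γ, where Γ ranges over the noncrossing, upward-oriented directed graphs on {1,…,n} with valence vector v, form a basis of the k-vector space R_v of SL₂(k)-invariants of multidegree v. -/

import Mathlib

open MvPolynomial

/-- The polynomial ring `A = k[x_1, y_1, …, x_n, y_n]`: variable `(i, 0)` is `x_i`
and `(i, 1)` is `y_i`. -/
abbrev PtRing (k : Type) [CommRing k] (n : ℕ) := MvPolynomial (Fin n × Fin 2) k

/-- The bracket `[ab] = x_a y_b − x_b y_a`. -/
noncomputable def bracket (k : Type) [CommRing k] (n : ℕ) (a b : Fin n) : PtRing k n :=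
  X (a, 0) * X (b, 1) - X (b, 0) * X (a, 1)

/-- The graph monomial `m_Γ = ∏_{(a,b) ∈ Γ} [ab]` of a directed graph `Γ`,
viewed as a multiset of directed edges. -/
noncomputable def graphMonomial (k : Type) [CommRing k] (n : ℕ)
    (Γ : Multiset (Fin n × Fin n)) : PtRing k n :=
  (Γ.map fun e => bracket k n e.1 e.2).prod

/-- The `k`-algebra endomorphism of `A` induced by a `2×2` matrix `g = ((p,q),(r,s))`:
`x_i ↦ p·x_i + r·y_i` and `y_i ↦ q·x_i + s·y_i`. -/
noncomputable def subst (k : Type) [CommRing k] (n : ℕ) (g : Matrix (Fin 2) (Fin 2) k) :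
    PtRing k n →ₐ[k] PtRing k n :=
  aeval fun p =>
    if p.2 = 0 then C (g 0 0) * X (p.1, 0) + C (g 1 0) * X (p.1, 1)
    else C (g 0 1) * X (p.1, 0) + C (g 1 1) * X (p.1, 1)

/-- The valence vector of a directed graph: the `i`-th entry is the number of edges
(with multiplicity) having `i` as an endpoint. -/
def valence (n : ℕ) (Γ : Multiset (Fin n × Fin n)) : Fin n → ℕ :=
  fun i => (Γ.map Prod.fst).count i + (Γ.map Prod.snd).count i

/-- `R_v`: the space of `SL₂(k)`-invariant multihomogeneous polynomials of multidegree `v`. -/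
noncomputable def Rv (k : Type) [CommRing k] (n : ℕ) (v : Fin n → ℕ) :
    Submodule k (PtRing k n) :=
  (⨅ g : Matrix.SpecialLinearGroup (Fin 2) k,
      LinearMap.ker ((subst k n (g : Matrix (Fin 2) (Fin 2) k)).toLinearMap
        - (LinearMap.id : PtRing k n →ₗ[k] PtRing k n))) ⊓
  weightedHomogeneousSubmodule k (fun p : Fin n × Fin 2 => Finsupp.single p.1 1)
    (Finsupp.equivFunOnFinite.symm v)

/-- A directed graph is noncrossing if no two of its edges have endpoint sets `{a,b}` and
`{c,d}` with `a < c < b < d`. -/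
def Noncrossing (n : ℕ) (Γ : Multiset (Fin n × Fin n)) : Prop :=
  ∀ e ∈ Γ, ∀ e' ∈ Γ, ¬ ∃ a b c d : Fin n,
    ({e.1, e.2} : Set (Fin n)) = {a, b} ∧ ({e'.1, e'.2} : Set (Fin n)) = {c, d} ∧
    a < c ∧ c < b ∧ b < d

/-- A directed graph is upward-oriented if every edge `(a,b)` satisfies `a < b`. -/
def Upward (n : ℕ) (Γ : Multiset (Fin n × Fin n)) : Prop :=
  ∀ e ∈ Γ, e.1 < e.2

/-!
# The basis of `SL₂`-invariants given by noncrossing graphs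

Let `p < l` be the two last vertices where `v` is nonzero. Restriction to the locus where the points
`p` and `l` coincide kills the multiples of `[pl]`, and on multihomogeneous polynomials nothing
else. On graphs it merges the vertex `l` into `p`, and this is a bijection from the noncrossing
graphs without an edge `(p, l)` onto all noncrossing graphs of the merged valence vector: the edges
arriving at the merged vertex have to be distributed such that those with the smaller initial
vertices go to `l`, which the valences allow in exactly one way. The remaining noncrossing graphs
are the noncrossing graphs with one edge `(p, l)` less, to which that edge is added without creating
a crossing. So both independence and spanning follow by induction from the exact sequence
`0 → R_{v - e_p - e_l} → R_v → R_{merged v}`. When at most one point is left, invariants are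
constant, because the transvections and the Weyl element of `SL₂` move points enough.
-/

/-! ### Noncrossing graphs -/

section Graphs

open Finsupp

variable {α β : Type*}

/-- The valence vector of a graph on an arbitrary vertex set, as a finitely supported function:
this is the shape in which it is a multidegree of polynomials. -/
noncomputable def valenceFinsupp (Γ : Multiset (α × α)) : α →₀ ℕ :=
  (Γ.map fun e => single e.1 1 + single e.2 1).sum

/-- The graph obtained by applying a map of vertices to both endpoints of every edge. -/
def mapGraph (φ : α → β) (Γ : Multiset (α × α)) : Multiset (β × β) :=
  Γ.map (Prod.map φ φ)

@[simp] lemma mapGraph_cons (φ : α → β) (e : α × α) (Γ : Multiset (α × α)) :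
    mapGraph φ (e ::ₘ Γ) = (φ e.1, φ e.2) ::ₘ mapGraph φ Γ :=
  Multiset.map_cons _ _ _

@[simp] lemma valenceFinsupp_zero : valenceFinsupp (0 : Multiset (α × α)) = 0 := rfl

@[simp] lemma valenceFinsupp_cons (e : α × α) (Γ : Multiset (α × α)) :
    valenceFinsupp (e ::ₘ Γ) = single e.1 1 + single e.2 1 + valenceFinsupp Γ := by
  simp [valenceFinsupp]

lemma valenceFinsupp_mapGraph (φ : α → β) (Γ : Multiset (α × α)) :
    valenceFinsupp (mapGraph φ Γ) = mapDomain φ (valenceFinsupp Γ) := by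
  induction Γ using Multiset.induction_on with
  | empty => simp [mapGraph]
  | cons e Γ ih => simp [mapDomain_add, mapDomain_single, ih]

lemma valenceFinsupp_ne_zero_iff {Γ : Multiset (α × α)} {i : α} :
    valenceFinsupp Γ i ≠ 0 ↔ ∃ e ∈ Γ, e.1 = i ∨ e.2 = i := by
  classical
  induction Γ using Multiset.induction_on with
  | empty => simp
  | cons e Γ ih =>
    simp only [valenceFinsupp_cons, Finsupp.add_apply, single_apply, Multiset.mem_cons,
      exists_eq_or_imp, ← ih]
    grind

variable [LinearOrder α]

/-- Crossing of two upward edges, the one starting first being `e`. -/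
def Crosses (e f : α × α) : Prop := e.1 < f.1 ∧ f.1 < e.2 ∧ e.2 < f.2

/-- The noncrossing upward-oriented graphs on a linearly ordered vertex set. -/
structure IsPlanar (Γ : Multiset (α × α)) : Prop where
  upward : ∀ e ∈ Γ, e.1 < e.2
  not_crosses : ∀ e ∈ Γ, ∀ f ∈ Γ, ¬ Crosses e f

/-- The noncrossing upward-oriented graphs with valence vector `w`. -/
def planarGraphs (w : α →₀ ℕ) : Set (Multiset (α × α)) :=
  {Γ | IsPlanar Γ ∧ valenceFinsupp Γ = w}

lemma isPlanar_cons {e : α × α} {Γ : Multiset (α × α)} :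
    IsPlanar (e ::ₘ Γ) ↔
      e.1 < e.2 ∧ (∀ f ∈ Γ, ¬ Crosses e f ∧ ¬ Crosses f e) ∧ IsPlanar Γ := by
  have irrefl : ¬ Crosses e e := fun h => h.1.false
  constructor
  · rintro ⟨hu, hc⟩
    simp only [Multiset.mem_cons, forall_eq_or_imp] at hu hc
    exact ⟨hu.1, fun f hf => ⟨hc.1.2 f hf, (hc.2 f hf).1⟩, hu.2, fun f hf => (hc.2 f hf).2⟩
  · rintro ⟨he, hef, hu, hc⟩
    constructor <;> simp only [Multiset.mem_cons, forall_eq_or_imp]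
    · exact ⟨he, hu⟩
    · exact ⟨⟨irrefl, fun f hf => (hef f hf).1⟩, fun f hf => ⟨(hef f hf).2, hc f hf⟩⟩

/-- The vertices `p < l` are the two last ones, as far as graphs with valence vector `w` are
concerned. Neither of them needs to be a vertex where `w` is nonzero. -/
structure IsTopPair (w : α →₀ ℕ) (p l : α) : Prop where
  lt : p < l
  le_or_eq : ∀ i, w i ≠ 0 → i ≤ p ∨ i = l

/-- The noncrossing upward-oriented graphs with valence vector `w` and without an edge from `p`
to `l`: those which remain loopless when `l` is merged into `p`. -/
def unlinkedGraphs (w : α →₀ ℕ) (p l : α) : Set (Multiset (α × α)) :=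
  {Γ ∈ planarGraphs w | (p, l) ∉ Γ}

/-- The map of vertices that merges `l` into `p`. -/
def collapse (p l i : α) : α := if i = l then p else i

@[simp] lemma collapse_left (p l : α) : collapse p l p = p := by grind [collapse]

@[simp] lemma collapse_right (p l : α) : collapse p l l = p := by grind [collapse]

lemma collapse_of_ne (p : α) {l i : α} (h : i ≠ l) : collapse p l i = i := by grind [collapse]

lemma collapse_lt_collapse_iff {p l i j : α} (hpl : p < l) (hi : i ≤ p ∨ i = l)
    (hj : j ≤ p ∨ j = l) :
    collapse p l i < collapse p l j ↔ i < j ∧ ¬ (i = p ∧ j = l) := by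
  grind [collapse]

section TopPair

variable {w : α →₀ ℕ} {p l a : α} {Γ : Multiset (α × α)}

lemma IsTopPair.add_single_left (h : IsTopPair w p l) : IsTopPair (w + single p 1) p l := by
  refine ⟨h.lt, fun i hi => ?_⟩
  by_cases hip : i = p
  · exact .inl hip.le
  · exact h.le_or_eq i (by simpa [single_apply, Ne.symm hip] using hi)

lemma IsTopPair.add_single_right (h : IsTopPair w p l) : IsTopPair (w + single l 1) p l := by
  refine ⟨h.lt, fun i hi => ?_⟩
  by_cases hil : i = l
  · exact .inr hil
  · exact h.le_or_eq i (by simpa [single_apply, Ne.symm hil] using hi)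

lemma IsTopPair.add_singles (h : IsTopPair w p l) :
    IsTopPair (single p 1 + single l 1 + w) p l := by
  rw [add_comm, ← add_assoc]
  exact h.add_single_left.add_single_right

lemma IsTopPair.of_add (v : α →₀ ℕ) (h : IsTopPair (v + w) p l) : IsTopPair w p l :=
  ⟨h.lt, fun i hi => h.le_or_eq i (by simp [hi])⟩

lemma IsTopPair.endpoints_le_or_eq (h : IsTopPair (valenceFinsupp Γ) p l) :
    ∀ e ∈ Γ, (e.1 ≤ p ∨ e.1 = l) ∧ (e.2 ≤ p ∨ e.2 = l) := fun e he =>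
  ⟨h.le_or_eq _ (valenceFinsupp_ne_zero_iff.2 ⟨e, he, .inl rfl⟩),
    h.le_or_eq _ (valenceFinsupp_ne_zero_iff.2 ⟨e, he, .inr rfl⟩)⟩

/-- An edge between the two last vertices crosses nothing. -/
lemma cons_mem_planarGraphs_iff (h : IsTopPair w p l) :
    (p, l) ::ₘ Γ ∈ planarGraphs (single p 1 + single l 1 + w) ↔ Γ ∈ planarGraphs w := by
  simp only [planarGraphs, Set.mem_ofPred_eq, valenceFinsupp_cons, add_right_inj, isPlanar_cons]
  refine and_congr_left fun hw => ?_
  have hS := (hw ▸ h).endpoints_le_or_eq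
  have hpl := h.lt
  grind [Crosses]

lemma planarGraphs_eq_union (h : IsTopPair w p l) :
    planarGraphs (single p 1 + single l 1 + w) =
      Multiset.cons (p, l) '' planarGraphs w ∪
        unlinkedGraphs (single p 1 + single l 1 + w) p l := by
  ext Γ
  by_cases hΓ : (p, l) ∈ Γ
  · obtain ⟨Γ₀, rfl⟩ := Multiset.exists_cons_of_mem hΓ
    simp [cons_mem_planarGraphs_iff h, unlinkedGraphs]
  · have : Γ ∉ Multiset.cons (p, l) '' planarGraphs w := by
      rintro ⟨Γ₀, -, rfl⟩
      exact hΓ (Multiset.mem_cons_self _ _)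
    simp [this, unlinkedGraphs, hΓ]

lemma mapGraph_collapse_mem_planarGraphs (h : IsTopPair w p l) (hΓ : Γ ∈ unlinkedGraphs w p l) :
    mapGraph (collapse p l) Γ ∈ planarGraphs (mapDomain (collapse p l) w) := by
  obtain ⟨⟨⟨hu, hc⟩, rfl⟩, hpl⟩ := hΓ
  have hS := h.endpoints_le_or_eq
  have lt_iff {i j : α} := collapse_lt_collapse_iff (i := i) (j := j) h.lt
  refine ⟨⟨?_, ?_⟩, valenceFinsupp_mapGraph _ _⟩ <;>
    simp only [mapGraph, Multiset.mem_map, forall_exists_index, and_imp,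
      forall_apply_eq_imp_iff₂, Prod.map_fst, Prod.map_snd, Crosses]
  · intro e he
    refine (lt_iff (hS e he).1 (hS e he).2).2 ⟨hu e he, ?_⟩
    rintro ⟨h₁, h₂⟩
    exact hpl (by rwa [← h₁, ← h₂])
  · rintro e he f hf ⟨h₁, h₂, h₃⟩
    exact hc e he f hf ⟨((lt_iff (hS e he).1 (hS f hf).1).1 h₁).1,
      ((lt_iff (hS f hf).1 (hS e he).2).1 h₂).1, ((lt_iff (hS e he).2 (hS f hf).2).1 h₃).1⟩

/-- An edge `(a, l)` that is last among those ending at `l` may be moved to `(a, p)`, where it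
becomes first among those ending at `p`, and conversely. -/
lemma cons_mem_unlinkedGraphs_iff (h : IsTopPair w p l) :
    ((a, l) ::ₘ Γ ∈ unlinkedGraphs (w + single l 1) p l ∧ ∀ c, (c, l) ∈ Γ → c ≤ a) ↔
      (a, p) ::ₘ Γ ∈ unlinkedGraphs (w + single p 1) p l ∧ ∀ c, (c, p) ∈ Γ → a ≤ c := by
  have hval (x : α) : single a 1 + single x 1 + valenceFinsupp Γ = w + single x 1 ↔
      single a 1 + valenceFinsupp Γ = w := by
    rw [add_right_comm, add_left_inj]
  simp only [unlinkedGraphs, planarGraphs, Set.mem_ofPred_eq, isPlanar_cons, valenceFinsupp_cons,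
    hval, Multiset.mem_cons, Prod.mk.injEq]
  by_cases hw : single a 1 + valenceFinsupp Γ = w
  · have hS := (IsTopPair.of_add _ (hw ▸ h)).endpoints_le_or_eq
    have hpl := h.lt
    have ha : a ≤ p ∨ a = l := h.le_or_eq a (by simp [← hw])
    constructor
    · rintro ⟨⟨⟨⟨hal, hc, hΓ⟩, -⟩, hne⟩, hmax⟩
      have := hΓ.upward
      grind [Crosses]
    · rintro ⟨⟨⟨⟨hal, hc, hΓ⟩, -⟩, hne⟩, hmax⟩
      have := hΓ.upward
      grind [Crosses]
  · simp [hw]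

lemma exists_eq_cons_forall_le {β γ : Type*} [LinearOrder γ] (g : β → γ)
    {Γ : Multiset (β × β)} {x : β} (hx : ∃ e ∈ Γ, e.2 = x) :
    ∃ a Γ₀, Γ = (a, x) ::ₘ Γ₀ ∧ ∀ c, (c, x) ∈ Γ₀ → g a ≤ g c := by
  classical
  obtain ⟨e, he, rfl⟩ := hx
  obtain ⟨⟨a, x⟩, ha, hmin⟩ := (Γ.toFinset.filter (·.2 = e.2)).exists_min_image (fun f => g f.1)
    ⟨e, by simpa using he⟩
  obtain ⟨haΓ, rfl⟩ : (a, x) ∈ Γ ∧ x = e.2 := by simpa using ha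
  obtain ⟨Γ₀, rfl⟩ := Multiset.exists_cons_of_mem haΓ
  exact ⟨a, Γ₀, rfl, fun c hc => hmin (c, e.2) (by simp [hc])⟩

lemma exists_edge_to_left (h : IsTopPair w p l)
    (hΓ : Γ ∈ unlinkedGraphs (w + single p 1) p l) : ∃ e ∈ Γ, e.2 = p := by
  obtain ⟨⟨⟨hu, -⟩, hw⟩, hpl⟩ := hΓ
  obtain ⟨e, he, hep⟩ := valenceFinsupp_ne_zero_iff.1 (show valenceFinsupp Γ p ≠ 0 by simp [hw])
  have hS := (hw ▸ h.add_single_left).endpoints_le_or_eq e he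
  have := hu e he
  grind

lemma exists_edge_to_right (h : IsTopPair w p l)
    (hΓ : Γ ∈ unlinkedGraphs (w + single l 1) p l) : ∃ e ∈ Γ, e.2 = l := by
  obtain ⟨⟨⟨hu, -⟩, hw⟩, -⟩ := hΓ
  obtain ⟨e, he, hel⟩ := valenceFinsupp_ne_zero_iff.1 (show valenceFinsupp Γ l ≠ 0 by simp [hw])
  have hS := (hw ▸ h.add_single_right).endpoints_le_or_eq e he
  have := hu e he
  have := h.lt
  grind

lemma bijOn_mapGraph_collapse_of_apply_eq_zero (hl : w l = 0) :
    Set.BijOn (mapGraph (collapse p l)) (unlinkedGraphs w p l)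
      (planarGraphs (mapDomain (collapse p l) w)) := by
  have hw : mapDomain (collapse p l) w = w := by
    refine (mapDomain_congr fun i hi => ?_).trans mapDomain_id
    exact collapse_of_ne p (by rintro rfl; simp [hl] at hi)
  have ne_right {Γ : Multiset (α × α)} (hΓ : valenceFinsupp Γ = w) :
      ∀ e ∈ Γ, e.1 ≠ l ∧ e.2 ≠ l := by
    intro e he
    refine ⟨?_, ?_⟩ <;> rintro rfl <;>
      exact valenceFinsupp_ne_zero_iff.2 ⟨e, he, by simp⟩ (hΓ ▸ hl)
  have hmap {Γ : Multiset (α × α)} (hΓ : valenceFinsupp Γ = w) :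
      mapGraph (collapse p l) Γ = Γ :=
    (Multiset.map_congr rfl fun e he => Prod.ext (collapse_of_ne p (ne_right hΓ e he).1)
      (collapse_of_ne p (ne_right hΓ e he).2)).trans Γ.map_id
  have unlinked : planarGraphs w = unlinkedGraphs w p l :=
    Set.Subset.antisymm (fun Γ hΓ => ⟨hΓ, fun hpl => (ne_right hΓ.2 _ hpl).2 rfl⟩) fun Γ hΓ => hΓ.1
  rw [hw, unlinked]
  exact (Set.bijOn_id _).congr fun Γ hΓ => (hmap hΓ.1.2).symm

lemma bijOn_mapGraph_collapse_add_single (h : IsTopPair w p l)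
    (ih : Set.BijOn (mapGraph (collapse p l)) (unlinkedGraphs (w + single p 1) p l)
      (planarGraphs (mapDomain (collapse p l) (w + single p 1)))) :
    Set.BijOn (mapGraph (collapse p l)) (unlinkedGraphs (w + single l 1) p l)
      (planarGraphs (mapDomain (collapse p l) (w + single l 1))) := by
  have exists_last {Γ : Multiset (α × α)} (hΓ : Γ ∈ unlinkedGraphs (w + single l 1) p l) :
      ∃ a Γ₀, Γ = (a, l) ::ₘ Γ₀ ∧ (a, p) ::ₘ Γ₀ ∈ unlinkedGraphs (w + single p 1) p l ∧
        ∀ c, (c, p) ∈ Γ₀ → a ≤ c := by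
    obtain ⟨a, Γ₀, rfl, hmax⟩ :=
      exists_eq_cons_forall_le OrderDual.toDual (exists_edge_to_right h hΓ)
    exact ⟨a, Γ₀, rfl, (cons_mem_unlinkedGraphs_iff h).1 ⟨hΓ, hmax⟩⟩
  refine ⟨fun Γ hΓ => mapGraph_collapse_mem_planarGraphs h.add_single_right hΓ, ?_, ?_⟩
  · intro Γ hΓ Δ hΔ hΓΔ
    obtain ⟨a, Γ₀, rfl, hΓ', ha⟩ := exists_last hΓ
    obtain ⟨b, Δ₀, rfl, hΔ', hb⟩ := exists_last hΔ
    have heq : (a, p) ::ₘ Γ₀ = (b, p) ::ₘ Δ₀ := ih.injOn hΓ' hΔ' (by simpa using hΓΔ)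
    have hab : a = b := by
      have hbΓ : (b, p) ∈ (a, p) ::ₘ Γ₀ := heq ▸ Multiset.mem_cons_self _ _
      have haΔ : (a, p) ∈ (b, p) ::ₘ Δ₀ := heq ▸ Multiset.mem_cons_self _ _
      grind
    subst hab
    rw [(Multiset.cons_inj_right _).1 heq]
  · intro Γ' hΓ'
    obtain ⟨Γ, hΓ, rfl⟩ := ih.surjOn (by simpa [mapDomain_add, mapDomain_single] using hΓ')
    obtain ⟨a, Γ₀, rfl, hmin⟩ := exists_eq_cons_forall_le id (exists_edge_to_left h hΓ)
    exact ⟨_, ((cons_mem_unlinkedGraphs_iff h).2 ⟨hΓ, hmin⟩).1, by simp⟩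

theorem bijOn_mapGraph_collapse (h : IsTopPair w p l) :
    Set.BijOn (mapGraph (collapse p l)) (unlinkedGraphs w p l)
      (planarGraphs (mapDomain (collapse p l) w)) := by
  induction ht : w l generalizing w with
  | zero => exact bijOn_mapGraph_collapse_of_apply_eq_zero ht
  | succ t ih =>
    obtain ⟨w₀, rfl⟩ : ∃ w₀, w = single l 1 + w₀ :=
      exists_add_of_le (single_le_iff.2 (by omega))
    have h₀ := h.of_add
    rw [add_comm]
    refine bijOn_mapGraph_collapse_add_single h₀ (ih h₀.add_single_left ?_)
    simpa [h.lt.ne, add_comm 1] using ht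

lemma exists_isTopPair (hw : (w.support : Set α).Nontrivial) :
    ∃ p l w₀, IsTopPair w₀ p l ∧ w = single p 1 + single l 1 + w₀ := by
  have hw₂ : w.support.Nontrivial := hw
  obtain ⟨l, hl⟩ := w.support.exists_maximal hw₂.nonempty
  obtain ⟨p, hp⟩ := (w.support.erase l).exists_maximal hw₂.erase_nonempty
  have hle : single p 1 + single l 1 ≤ w := fun i => by
    have hpw := hp.prop
    have hlw := hl.prop
    simp only [Finset.mem_erase, Finsupp.mem_support_iff] at hpw hlw
    simp only [Finsupp.add_apply, single_apply]
    grind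
  obtain ⟨hpl, hpw⟩ := Finset.mem_erase.1 hp.prop
  have hlt : p < l := lt_of_le_of_ne (le_of_not_gt fun h => hl.not_prop_of_gt h hpw) hpl
  obtain ⟨w₀, rfl⟩ := exists_add_of_le hle
  refine ⟨p, l, w₀, ⟨hlt, fun i hi => or_iff_not_imp_right.2 fun hil => ?_⟩, rfl⟩
  exact le_of_not_gt fun h => hp.not_prop_of_gt h (by simp [hi, hil])

lemma card_support_mapDomain_collapse_lt (hp : w p ≠ 0) (hl : w l ≠ 0) (hpl : p ≠ l) :
    (mapDomain (collapse p l) w).support.card < w.support.card := by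
  classical
  have hsub : (mapDomain (collapse p l) w).support ⊆ w.support.erase l := by
    refine mapDomain_support.trans (Finset.image_subset_iff.2 fun i hi => Finset.mem_erase.2 ?_)
    rw [Finsupp.mem_support_iff] at hi ⊢
    grind [collapse]
  exact (Finset.card_le_card hsub).trans_lt (Finset.card_erase_lt_of_mem (by simpa using hl))

end TopPair

lemma valence_induction {P : (α →₀ ℕ) → Prop}
    (subsingleton : ∀ w, (w.support : Set α).Subsingleton → P w)
    (top_pair : ∀ w p l, IsTopPair w p l → P w →
      P (mapDomain (collapse p l) (single p 1 + single l 1 + w)) →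
      P (single p 1 + single l 1 + w)) (w : α →₀ ℕ) : P w := by
  induction hN : w.degree + w.support.card using Nat.strong_induction_on generalizing w with
  | _ N ih =>
    subst hN
    rcases (w.support : Set α).subsingleton_or_nontrivial with hw | hw
    · exact subsingleton w hw
    obtain ⟨p, l, w₀, h, rfl⟩ := exists_isTopPair hw
    refine top_pair w₀ p l h (ih _ ?_ _ rfl) (ih _ ?_ _ rfl)
    · have := Finset.card_le_card (support_mono (le_add_self : w₀ ≤ single p 1 + single l 1 + w₀))
      simp only [map_add, degree_single]
      omega
    · rw [degree_mapDomain]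
      exact Nat.add_lt_add_left (card_support_mapDomain_collapse_lt (by simp) (by simp) h.lt.ne) _

lemma planarGraphs_subset_of_subsingleton {w : α →₀ ℕ} (hw : (w.support : Set α).Subsingleton) :
    planarGraphs w ⊆ {0} := by
  rintro Γ ⟨⟨hu, -⟩, rfl⟩
  refine Multiset.eq_zero_of_forall_notMem fun e he => (hu e he).ne (hw ?_ ?_) <;>
    simpa using valenceFinsupp_ne_zero_iff.2 ⟨e, he, by simp⟩

variable {n : ℕ}

lemma valenceFinsupp_apply (Γ : Multiset (Fin n × Fin n)) (i : Fin n) :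
    valenceFinsupp Γ i = valence n Γ i := by
  induction Γ using Multiset.induction_on with
  | empty => simp [valence]
  | cons e Γ ih =>
    simp only [valenceFinsupp_cons, Finsupp.add_apply, Finsupp.single_apply, ih, valence,
      Multiset.map_cons, Multiset.count_cons]
    grind

lemma mem_planarGraphs_iff {v : Fin n → ℕ} {Γ : Multiset (Fin n × Fin n)} :
    Γ ∈ planarGraphs (Finsupp.equivFunOnFinite.symm v) ↔
      (∀ e ∈ Γ, e.1 ≠ e.2) ∧ Noncrossing n Γ ∧ Upward n Γ ∧ valence n Γ = v := by
  have hval : valenceFinsupp Γ = Finsupp.equivFunOnFinite.symm v ↔ valence n Γ = v := by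
    simp [Finsupp.ext_iff, funext_iff, valenceFinsupp_apply]
  have endpoints {a b c d : Fin n} (hab : a < b) (hcd : c < d)
      (h : ({a, b} : Set (Fin n)) = {c, d}) : a = c ∧ b = d := by
    rcases Set.pair_eq_pair_iff.1 h with h | ⟨rfl, rfl⟩
    exacts [h, absurd hab hcd.not_gt]
  constructor
  · rintro ⟨⟨hu, hc⟩, hv⟩
    refine ⟨fun e he => (hu e he).ne, ?_, hu, hval.1 hv⟩
    rintro e he f hf ⟨a, b, c, d, hab, hcd, hac, hcb, hbd⟩
    obtain ⟨rfl, rfl⟩ := endpoints (hu e he) (hac.trans hcb) hab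
    obtain ⟨rfl, rfl⟩ := endpoints (hu f hf) (hcb.trans hbd) hcd
    exact hc e he f hf ⟨hac, hcb, hbd⟩
  · rintro ⟨-, hc, hu, hv⟩
    exact ⟨⟨hu, fun e he f hf h => hc e he f hf ⟨_, _, _, _, rfl, rfl, h⟩⟩, hval.2 hv⟩

end Graphs

/-! ### Multihomogeneous invariants and brackets -/

section Invariants

open Finsupp

variable {k : Type} [CommRing k] {m n : ℕ}

/-- The multigrading of the polynomial ring: both coordinates of the `i`-th point have as degree
the `i`-th basis vector. -/
noncomputable abbrev pointWeight (n : ℕ) : Fin n × Fin 2 → Fin n →₀ ℕ := fun q => single q.1 1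

lemma weight_pointWeight (s : Fin n × Fin 2 →₀ ℕ) :
    weight (pointWeight n) s = mapDomain Prod.fst s := by
  simp [weight_apply, mapDomain]

lemma mem_Rv_iff {w : Fin n →₀ ℕ} {f : PtRing k n} :
    f ∈ Rv k n w ↔ (∀ g : Matrix.SpecialLinearGroup (Fin 2) k,
      subst k n (g : Matrix (Fin 2) (Fin 2) k) f = f) ∧
        IsWeightedHomogeneous (pointWeight n) f w := by
  have : equivFunOnFinite.symm (w : Fin n → ℕ) = w := equivFunOnFinite.symm_apply_apply w
  simp [Rv, Submodule.mem_iInf, sub_eq_zero, this, mem_weightedHomogeneousSubmodule]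

lemma subst_bracket (g : Matrix.SpecialLinearGroup (Fin 2) k) (a b : Fin n) :
    subst k n (g : Matrix (Fin 2) (Fin 2) k) (bracket k n a b) = bracket k n a b := by
  have hdet : (C (g.1 0 0) * C (g.1 1 1) - C (g.1 0 1) * C (g.1 1 0) : PtRing k n) = 1 := by
    rw [← C_mul, ← C_mul, ← C_sub, ← Matrix.det_fin_two, g.2, C_1]
  simp only [subst, bracket, map_sub, map_mul, aeval_X, if_true, one_ne_zero, if_false]
  linear_combination (X (a, 0) * X (b, 1) - X (b, 0) * X (a, 1)) * hdet

lemma subst_graphMonomial (g : Matrix.SpecialLinearGroup (Fin 2) k)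
    (Γ : Multiset (Fin n × Fin n)) :
    subst k n (g : Matrix (Fin 2) (Fin 2) k) (graphMonomial k n Γ) = graphMonomial k n Γ := by
  simp [graphMonomial, map_multiset_prod, Multiset.map_map, subst_bracket]

lemma isWeightedHomogeneous_bracket (a b : Fin n) :
    IsWeightedHomogeneous (pointWeight n) (bracket k n a b) (single a 1 + single b 1) := by
  have h (p q : Fin n × Fin 2) := (isWeightedHomogeneous_X k (pointWeight n) p).mul
    (isWeightedHomogeneous_X k (pointWeight n) q)
  refine (h (a, 0) (b, 1)).sub ?_
  rw [add_comm]
  exact h (b, 0) (a, 1)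

lemma graphMonomial_zero : graphMonomial k n 0 = 1 := by simp [graphMonomial]

lemma graphMonomial_cons (e : Fin n × Fin n) (Γ : Multiset (Fin n × Fin n)) :
    graphMonomial k n (e ::ₘ Γ) = bracket k n e.1 e.2 * graphMonomial k n Γ := by
  simp [graphMonomial]

lemma isWeightedHomogeneous_graphMonomial (Γ : Multiset (Fin n × Fin n)) :
    IsWeightedHomogeneous (pointWeight n) (graphMonomial k n Γ) (valenceFinsupp Γ) := by
  induction Γ using Multiset.induction_on with
  | empty => simpa [graphMonomial] using isWeightedHomogeneous_one k (pointWeight n)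
  | cons e Γ ih =>
    rw [graphMonomial_cons, valenceFinsupp_cons]
    exact (isWeightedHomogeneous_bracket _ _).mul ih

lemma graphMonomial_mem_Rv (Γ : Multiset (Fin n × Fin n)) :
    graphMonomial k n Γ ∈ Rv k n (valenceFinsupp Γ) :=
  mem_Rv_iff.2 ⟨fun g => subst_graphMonomial g Γ, isWeightedHomogeneous_graphMonomial Γ⟩

lemma bracket_ne_zero [Nontrivial k] {a b : Fin n} (h : a ≠ b) : bracket k n a b ≠ 0 := by
  intro h₀
  have := congrArg (eval fun q : Fin n × Fin 2 =>
    if q = (a, 0) ∨ q = (b, 1) then (1 : k) else 0) h₀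
  simp [bracket, h.symm] at this

/-- The algebra map induced by a map of points. For `φ = collapse a b` it is restriction to the
locus where the point `b` coincides with the point `a`. -/
noncomputable def renamePoints (k : Type) [CommRing k] (φ : Fin m → Fin n) :
    PtRing k m →ₐ[k] PtRing k n :=
  rename (Prod.map φ id)

lemma renamePoints_graphMonomial (φ : Fin m → Fin n) (Γ : Multiset (Fin m × Fin m)) :
    renamePoints k φ (graphMonomial k m Γ) = graphMonomial k n (mapGraph φ Γ) := by
  simp [graphMonomial, map_multiset_prod, Multiset.map_map, bracket, renamePoints, mapGraph]

lemma subst_renamePoints (φ : Fin m → Fin n) (g : Matrix (Fin 2) (Fin 2) k) (f : PtRing k m) :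
    subst k n g (renamePoints k φ f) = renamePoints k φ (subst k m g f) := by
  have : (subst k n g).comp (renamePoints k φ) = (renamePoints k φ).comp (subst k m g) := by
    refine MvPolynomial.algHom_ext fun ⟨i, j⟩ => ?_
    fin_cases j <;> simp [subst, renamePoints]
  exact DFunLike.congr_fun this f

lemma isWeightedHomogeneous_renamePoints (φ : Fin m → Fin n) {f : PtRing k m} {w : Fin m →₀ ℕ}
    (hf : IsWeightedHomogeneous (pointWeight m) f w) :
    IsWeightedHomogeneous (pointWeight n) (renamePoints k φ f) (mapDomain φ w) := by
  rw [f.as_sum, map_sum]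
  refine IsWeightedHomogeneous.sum _ _ _ fun s hs => ?_
  rw [renamePoints, rename_monomial]
  refine isWeightedHomogeneous_monomial _ _ _ ?_
  rw [← hf (MvPolynomial.mem_support_iff.1 hs), weight_pointWeight, weight_pointWeight,
    ← mapDomain_comp, ← mapDomain_comp]
  rfl

lemma renamePoints_mem_Rv (φ : Fin m → Fin n) {f : PtRing k m} {w : Fin m →₀ ℕ}
    (hf : f ∈ Rv k m w) : renamePoints k φ f ∈ Rv k n (mapDomain φ w) := by
  rw [mem_Rv_iff] at *
  exact ⟨fun g => by rw [subst_renamePoints, hf.1], isWeightedHomogeneous_renamePoints φ hf.2⟩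

lemma aeval_mul_of_isWeightedHomogeneous {B : Type*} [CommRing B] [Algebra k B] {f : PtRing k n}
    {w : Fin n →₀ ℕ} (hf : IsWeightedHomogeneous (pointWeight n) f w) (c : Fin n → B)
    (x : Fin n × Fin 2 → B) :
    aeval (fun q => c q.1 * x q) f = (w.prod fun i t => c i ^ t) * aeval x f := by
  rw [f.as_sum, map_sum, map_sum, Finset.mul_sum]
  refine Finset.sum_congr rfl fun s hs => ?_
  rw [aeval_monomial, aeval_monomial, ← hf (MvPolynomial.mem_support_iff.1 hs),
    weight_pointWeight, prod_mapDomain_index (by simp) (by simp [pow_add])]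
  simp only [mul_pow, prod_mul]
  ring

lemma prod_mulSingle_pow {ι B : Type*} [DecidableEq ι] [CommMonoid B] (w : ι →₀ ℕ) (b : ι) (z : B) :
    (w.prod fun i t => (Pi.mulSingle b z : ι → B) i ^ t) = z ^ w b := by
  rw [Finsupp.prod_eq_single b] <;> simp +contextual

/-- Modulo `[ab]`, the points `a` and `b` are proportional. -/
lemma bracket_dvd_sub {f : PtRing k n} {w : Fin n →₀ ℕ}
    (hf : IsWeightedHomogeneous (pointWeight n) f w) (a b : Fin n) :
    bracket k n a b ∣
      X (a, 0) ^ w b * f - X (b, 0) ^ w b * renamePoints k (collapse a b) f := by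
  rw [← Ideal.mem_span_singleton, ← Ideal.Quotient.eq]
  set q := Ideal.Quotient.mkₐ k (Ideal.span {bracket k n a b})
  have hrel : q (X (a, 0)) * q (X (b, 1)) = q (X (b, 0)) * q (X (a, 1)) := by
    rw [← map_mul, ← map_mul]
    exact Ideal.Quotient.eq.2 (Ideal.subset_span rfl)
  have hmk (h : PtRing k n) : aeval (fun i => q (X i)) h = q h :=
    (DFunLike.congr_fun (aeval_unique q) h).symm
  have hmk_rename : aeval (fun i : Fin n × Fin 2 => q (X (collapse a b i.1, i.2))) f =
      q (renamePoints k (collapse a b) f) := by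
    rw [← hmk, renamePoints, aeval_rename]
    rfl
  have hscale (z : PtRing k n) (x) := aeval_mul_of_isWeightedHomogeneous hf
    (Pi.mulSingle b (q z)) x
  simp only [prod_mulSingle_pow] at hscale
  change q _ = q _
  rw [map_mul, map_mul, map_pow, map_pow, ← hmk f, ← hmk_rename, ← hscale, ← hscale]
  congr 2
  ext ⟨i, j⟩
  by_cases hi : i = b
  · subst hi
    fin_cases j
    · simpa using mul_comm _ _
    · simpa using hrel
  · simp [hi, collapse_of_ne]

lemma bracket_dvd_of_renamePoints_eq_zero [IsDomain k] {f : PtRing k n} {w : Fin n →₀ ℕ}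
    {a b : Fin n} (hab : a ≠ b) (hf : IsWeightedHomogeneous (pointWeight n) f w)
    (h₀ : renamePoints k (collapse a b) f = 0) : bracket k n a b ∣ f := by
  have hX : Prime (X (a, 0) : PtRing k n) := X_prime
  have hndvd : ¬ (X (a, 0) : PtRing k n) ∣ bracket k n a b := by
    intro hdvd
    have := map_dvd (eval fun q : Fin n × Fin 2 =>
      if q = (b, 0) ∨ q = (a, 1) then (1 : k) else 0) hdvd
    simp [bracket, hab] at this
  obtain ⟨h, hh⟩ : bracket k n a b ∣ X (a, 0) ^ w b * f := by
    simpa [h₀] using bracket_dvd_sub hf a b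
  obtain ⟨g, rfl⟩ : X (a, 0) ^ w b ∣ h :=
    hX.pow_dvd_of_dvd_mul_left _ hndvd (hh ▸ dvd_mul_right _ _)
  exact ⟨g, mul_left_cancel₀ (pow_ne_zero (w b) hX.ne_zero) (by rw [hh]; ring)⟩

lemma exists_eq_bracket_mul [IsDomain k] {f : PtRing k n} {w : Fin n →₀ ℕ} {a b : Fin n}
    (hab : a ≠ b) (hf : f ∈ Rv k n (single a 1 + single b 1 + w : Fin n →₀ ℕ))
    (h₀ : renamePoints k (collapse a b) f = 0) : ∃ g ∈ Rv k n w, bracket k n a b * g = f := by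
  classical
  let _ := weightedGradedAlgebra k (pointWeight n)
  rw [mem_Rv_iff] at hf
  obtain ⟨g, hg⟩ := bracket_dvd_of_renamePoints_eq_zero hab hf.2 h₀
  have hcomp := DirectSum.coe_decompose_mul_of_left_mem_of_le
    (weightedHomogeneousSubmodule k (pointWeight n)) (b := g)
    (isWeightedHomogeneous_bracket (k := k) a b) (le_self_add (b := w))
  have hdeg : f ∈ weightedHomogeneousSubmodule k (pointWeight n) _ := hf.2
  rw [← hg, DirectSum.decompose_of_mem_same _ hdeg, add_tsub_cancel_left] at hcomp
  refine ⟨_, mem_Rv_iff.2 ⟨fun γ => mul_left_cancel₀ (bracket_ne_zero (k := k) hab) ?_,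
    (mem_weightedHomogeneousSubmodule k _ _ _).1 (SetLike.coe_mem _)⟩, hcomp.symm⟩
  rw [← subst_bracket γ, ← map_mul, subst_bracket, ← hcomp, hf.1]

end Invariants

/-! ### Invariants of one point -/

section OnePoint

open Finsupp

variable {k : Type} [CommRing k] {n : ℕ}

lemma aeval_congr_of_isWeightedHomogeneous {B : Type*} [CommRing B] [Algebra k B] {f : PtRing k n}
    {w : Fin n →₀ ℕ} (hf : IsWeightedHomogeneous (pointWeight n) f w) {x y : Fin n × Fin 2 → B}
    (hxy : ∀ i ∈ w.support, ∀ j, x (i, j) = y (i, j)) : aeval x f = aeval y f := by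
  let c : Fin n → B := fun i => if i ∈ w.support then 1 else 0
  have hc : (w.prod fun i t => c i ^ t) = 1 :=
    Finset.prod_eq_one fun i hi => by simp only [c, if_pos hi, one_pow]
  have hcxy : (fun q : Fin n × Fin 2 => c q.1 * x q) = fun q => c q.1 * y q := by
    ext ⟨i, j⟩
    by_cases hi : i ∈ w.support
    · rw [hxy i hi j]
    · simp only [c, if_neg hi, zero_mul]
  have hx := aeval_mul_of_isWeightedHomogeneous hf c x
  rwa [hcxy, aeval_mul_of_isWeightedHomogeneous hf, hc, one_mul, one_mul, eq_comm] at hx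

/-- Evaluation at the configuration all of whose points are equal to `(x, y)`. -/
noncomputable def evalDiagonal {B : Type*} [CommRing B] [Algebra k B] (x y : B) :
    PtRing k n →ₐ[k] B :=
  aeval fun q => ![x, y] q.2

lemma map_evalDiagonal {A B : Type*} [CommRing A] [Algebra k A] [CommRing B] [Algebra k B]
    (φ : A →ₐ[k] B) (x y : A) (f : PtRing k n) :
    φ (evalDiagonal x y f) = evalDiagonal (φ x) (φ y) f := by
  have : φ.comp (evalDiagonal x y) = evalDiagonal (n := n) (φ x) (φ y) := by
    refine MvPolynomial.algHom_ext fun ⟨i, j⟩ => ?_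
    fin_cases j <;> simp [evalDiagonal]
  exact DFunLike.congr_fun this f

lemma evalDiagonal_subst (g : Matrix (Fin 2) (Fin 2) k) (x y : k) (f : PtRing k n) :
    evalDiagonal x y (subst k n g f) =
      evalDiagonal (g 0 0 * x + g 1 0 * y) (g 0 1 * x + g 1 1 * y) f := by
  have : (evalDiagonal x y).comp (subst k n g) =
      evalDiagonal (g 0 0 * x + g 1 0 * y) (g 0 1 * x + g 1 1 * y) := by
    refine MvPolynomial.algHom_ext fun ⟨i, j⟩ => ?_
    fin_cases j <;> simp [evalDiagonal, subst]
  exact DFunLike.congr_fun this f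

variable [IsDomain k] [Infinite k]

lemma evalDiagonal_eq_of_shear {f : PtRing k n}
    (hf : ∀ c x y : k, evalDiagonal x (c * x + y) f = evalDiagonal x y f) (x y : k) :
    evalDiagonal x y f = evalDiagonal x 0 f := by
  have eval_snd (x y : k) :
      (evalDiagonal (.C x) .X f : Polynomial k).eval y = evalDiagonal x y f := by
    simpa using map_evalDiagonal (Polynomial.aeval y) (.C x) .X f
  have eval_fst (x y : k) :
      (evalDiagonal .X (.C y) f : Polynomial k).eval x = evalDiagonal x y f := by
    simpa using map_evalDiagonal (Polynomial.aeval x) .X (.C y) f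
  have eq_of_ne (x : k) (hx : x ≠ 0) : evalDiagonal x y f = evalDiagonal x 0 f := by
    have hconst : (evalDiagonal (.C x) .X f : Polynomial k) = .C (evalDiagonal x 0 f) := by
      refine Polynomial.eq_of_infinite_eval_eq _ _
        ((Set.infinite_range_of_injective (mul_left_injective₀ hx)).mono ?_)
      rintro _ ⟨c, rfl⟩
      simpa [eval_snd] using hf c x 0
    rw [← eval_snd, hconst, Polynomial.eval_C]
  have hpoly : (evalDiagonal .X (.C y) f : Polynomial k) = evalDiagonal .X (.C 0) f := by
    refine Polynomial.eq_of_infinite_eval_eq _ _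
      ((Set.finite_singleton 0).infinite_compl.mono fun x hx => ?_)
    simpa only [eval_fst, Set.mem_ofPred_eq] using eq_of_ne x hx
  rw [← eval_fst, hpoly, eval_fst]

lemma evalDiagonal_eq_of_subst_eq {f : PtRing k n}
    (hf : ∀ g : Matrix.SpecialLinearGroup (Fin 2) k,
      subst k n (g : Matrix (Fin 2) (Fin 2) k) f = f) (x y : k) :
    evalDiagonal x y f = evalDiagonal 0 0 f := by
  have shear (c x y : k) : evalDiagonal x (c * x + y) f = evalDiagonal x y f := by
    have := evalDiagonal_subst !![1, c; 0, 1] x y f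
    simpa [hf ⟨!![1, c; 0, 1], by simp⟩] using this.symm
  have swap (x y : k) : evalDiagonal (-y) x f = evalDiagonal x y f := by
    have := evalDiagonal_subst !![0, 1; -1, 0] x y f
    simpa [hf ⟨!![0, 1; -1, 0], by simp⟩] using this.symm
  calc evalDiagonal x y f = evalDiagonal x 0 f := evalDiagonal_eq_of_shear shear x y
    _ = evalDiagonal 0 x f := by simpa using (swap x 0).symm
    _ = evalDiagonal 0 0 f := evalDiagonal_eq_of_shear shear 0 x

lemma exists_eq_C_of_mem_Rv {f : PtRing k n} {w : Fin n →₀ ℕ}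
    (hw : (w.support : Set (Fin n)).Subsingleton) (hf : f ∈ Rv k n w) : ∃ c, f = C c := by
  obtain ⟨hinv, hdeg⟩ := mem_Rv_iff.1 hf
  refine ⟨evalDiagonal 0 0 f, MvPolynomial.funext fun z => ?_⟩
  obtain ⟨x, y, hxy⟩ : ∃ x y, ∀ i ∈ w.support, ∀ j, z (i, j) = ![x, y] j := by
    rcases hw.eq_empty_or_singleton with hw | ⟨i, hw⟩
    · exact ⟨0, 0, by simp_all⟩
    · refine ⟨z (i, 0), z (i, 1), ?_⟩
      simp only [Finset.coe_eq_singleton] at hw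
      simp [hw, Fin.forall_fin_two]
  rw [eval_C, ← evalDiagonal_eq_of_subst_eq hinv x y]
  exact aeval_congr_of_isWeightedHomogeneous hdeg hxy

end OnePoint

/-! ### The basis of graph monomials -/

section Basis

open Finsupp

lemma linearIndepOn_union_of_map {R M N ι : Type*} [Ring R] [AddCommGroup M] [AddCommGroup N]
    [Module R M] [Module R N] (L : M →ₗ[R] N) {v : ι → M} {s t : Set ι}
    (hs : LinearIndepOn R v s) (hL : ∀ i ∈ s, L (v i) = 0) (ht : LinearIndepOn R (L ∘ v) t) :
    LinearIndepOn R v (s ∪ t) := by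
  have hker : Submodule.span R (v '' s) ≤ LinearMap.ker L := by
    rw [Submodule.span_le]
    rintro _ ⟨i, hi, rfl⟩
    exact hL i hi
  have hdisj : Disjoint (Submodule.span R (v '' t)) (LinearMap.ker L) := by
    rw [Set.image_eq_range]
    exact Submodule.range_ker_disjoint ht
  exact hs.union (ht.of_comp L) (hdisj.symm.mono_left hker)

variable {k : Type} [CommRing k] {m n : ℕ}

lemma graphMonomial_comp_cons (a b : Fin n) :
    graphMonomial k n ∘ Multiset.cons (a, b) =
      LinearMap.mulLeft k (bracket k n a b) ∘ graphMonomial k n :=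
  funext fun Γ => graphMonomial_cons (a, b) Γ

lemma graphMonomial_comp_mapGraph (φ : Fin m → Fin n) :
    graphMonomial k n ∘ mapGraph φ = (renamePoints k φ).toLinearMap ∘ graphMonomial k m :=
  funext fun Γ => (renamePoints_graphMonomial φ Γ).symm

lemma span_graphMonomial_cons (a b : Fin n) (S : Set (Multiset (Fin n × Fin n))) :
    Submodule.span k (graphMonomial k n '' (Multiset.cons (a, b) '' S)) =
      (Submodule.span k (graphMonomial k n '' S)).map (LinearMap.mulLeft k (bracket k n a b)) := by
  rw [Submodule.map_span, ← Set.image_comp, ← Set.image_comp, graphMonomial_comp_cons]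

lemma span_graphMonomial_mapGraph (φ : Fin m → Fin n) (S : Set (Multiset (Fin m × Fin m))) :
    Submodule.span k (graphMonomial k n '' (mapGraph φ '' S)) =
      (Submodule.span k (graphMonomial k m '' S)).map (renamePoints k φ).toLinearMap := by
  rw [Submodule.map_span, ← Set.image_comp, ← Set.image_comp, graphMonomial_comp_mapGraph]

lemma span_graphMonomial_le_Rv (w : Fin n →₀ ℕ) :
    Submodule.span k (graphMonomial k n '' planarGraphs w) ≤ Rv k n w := by
  rw [Submodule.span_le]
  rintro _ ⟨Γ, ⟨-, rfl⟩, rfl⟩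
  exact graphMonomial_mem_Rv Γ

lemma renamePoints_bracket_collapse (a b : Fin n) :
    renamePoints k (collapse a b) (bracket k n a b) = 0 := by
  simp [renamePoints, bracket]

variable [IsDomain k]

lemma linearIndepOn_graphMonomial_cons {S : Set (Multiset (Fin n × Fin n))} {a b : Fin n}
    (hab : a ≠ b) (hS : LinearIndepOn k (graphMonomial k n) S) :
    LinearIndepOn k (graphMonomial k n) (Multiset.cons (a, b) '' S) := by
  refine LinearIndepOn.image_of_comp (R := k) _ (graphMonomial k n) ?_
  rw [graphMonomial_comp_cons]
  exact hS.map_injOn _ (mul_right_injective₀ (bracket_ne_zero hab)).injOn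

theorem linearIndepOn_graphMonomial (w : Fin n →₀ ℕ) :
    LinearIndepOn k (graphMonomial k n) (planarGraphs w) := by
  induction w using valence_induction with
  | subsingleton w hw =>
    have : LinearIndepOn k (graphMonomial k n) {0} := by
      rw [linearIndepOn_singleton_iff, graphMonomial_zero]
      exact one_ne_zero
    exact this.mono (planarGraphs_subset_of_subsingleton hw)
  | top_pair w p l h ih_edge ih_merge =>
    have hbij := bijOn_mapGraph_collapse h.add_singles
    rw [← hbij.image_eq] at ih_merge
    rw [planarGraphs_eq_union h]
    refine linearIndepOn_union_of_map (renamePoints k (collapse p l)).toLinearMap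
      (linearIndepOn_graphMonomial_cons h.lt.ne ih_edge) ?_ ?_
    · rintro _ ⟨Γ, -, rfl⟩
      simp [graphMonomial_cons, renamePoints_bracket_collapse]
    · rw [← graphMonomial_comp_mapGraph]
      exact ih_merge.comp_of_image hbij.injOn

variable [Infinite k]

lemma Rv_le_span_graphMonomial_of_subsingleton {w : Fin n →₀ ℕ}
    (hw : (w.support : Set (Fin n)).Subsingleton) :
    Rv k n w ≤ Submodule.span k (graphMonomial k n '' planarGraphs w) := by
  intro f hf
  obtain ⟨c, rfl⟩ := exists_eq_C_of_mem_Rv hw hf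
  rcases eq_or_ne c 0 with rfl | hc
  · simp
  obtain rfl : 0 = w := (isWeightedHomogeneous_C _ c).inj_right (by simpa) (mem_Rv_iff.1 hf).2
  have hC : (C c : PtRing k n) = c • graphMonomial k n 0 := by
    rw [graphMonomial_zero, smul_eq_C_mul, mul_one]
  rw [hC]
  exact Submodule.smul_mem _ _
    (Submodule.subset_span ⟨0, ⟨⟨by simp, by simp⟩, valenceFinsupp_zero⟩, rfl⟩)

theorem Rv_le_span_graphMonomial (w : Fin n →₀ ℕ) :
    Rv k n w ≤ Submodule.span k (graphMonomial k n '' planarGraphs w) := by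
  induction w using valence_induction with
  | subsingleton w hw => exact Rv_le_span_graphMonomial_of_subsingleton hw
  | top_pair w p l h ih_edge ih_merge =>
    intro f hf
    have hf_merge := ih_merge (renamePoints_mem_Rv (collapse p l) hf)
    rw [← (bijOn_mapGraph_collapse h.add_singles).image_eq, span_graphMonomial_mapGraph] at hf_merge
    obtain ⟨g, hg, hgf⟩ := hf_merge
    have hg_span := Submodule.span_mono (Set.image_mono (Set.sep_subset _ _)) hg
    obtain ⟨h₀, hh₀, hmul⟩ := exists_eq_bracket_mul h.lt.ne
      (sub_mem hf (span_graphMonomial_le_Rv _ hg_span))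
      (by rw [map_sub, sub_eq_zero]; exact hgf.symm)
    have hsub_span : f - g ∈
        Submodule.span k (graphMonomial k n '' (Multiset.cons (p, l) '' planarGraphs w)) := by
      rw [span_graphMonomial_cons]
      exact ⟨h₀, ih_edge hh₀, hmul⟩
    rw [← sub_add_cancel f g, planarGraphs_eq_union h, Set.image_union, Submodule.span_union]
    exact Submodule.add_mem_sup hsub_span hg

theorem Rv_eq_span_graphMonomial (w : Fin n →₀ ℕ) :
    Rv k n w = Submodule.span k (graphMonomial k n '' planarGraphs w) :=
  (Rv_le_span_graphMonomial w).antisymm (span_graphMonomial_le_Rv w)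

end Basis

theorem stmt6_general (k : Type) [CommRing k] [IsDomain k] [Infinite k] (n : ℕ) (v : Fin n → ℕ) :
    LinearIndependent k
      (fun Γ : {Γ : Multiset (Fin n × Fin n) //
          (∀ e ∈ Γ, e.1 ≠ e.2) ∧ Noncrossing n Γ ∧ Upward n Γ ∧ valence n Γ = v} =>
        graphMonomial k n Γ.1) ∧
    Submodule.span k
      (Set.range (fun Γ : {Γ : Multiset (Fin n × Fin n) //
          (∀ e ∈ Γ, e.1 ≠ e.2) ∧ Noncrossing n Γ ∧ Upward n Γ ∧ valence n Γ = v} =>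
        graphMonomial k n Γ.1)) = Rv k n v := by
  have hset : {Γ : Multiset (Fin n × Fin n) |
      (∀ e ∈ Γ, e.1 ≠ e.2) ∧ Noncrossing n Γ ∧ Upward n Γ ∧ valence n Γ = v} =
      planarGraphs (Finsupp.equivFunOnFinite.symm v) := Set.ext fun _ => mem_planarGraphs_iff.symm
  have hindep := linearIndepOn_graphMonomial (k := k) (Finsupp.equivFunOnFinite.symm v)
  have hspan := Rv_eq_span_graphMonomial (k := k) (Finsupp.equivFunOnFinite.symm v)
  rw [← hset] at hindep hspan
  rw [Set.image_eq_range] at hspan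
  exact ⟨hindep, hspan.symm⟩

/-- In characteristic zero, the graph monomials of noncrossing upward-oriented graphs of
valence vector `v` form a basis of `R_v`. -/
theorem stmt6 (k : Type) [Field k] [CharZero k] (n : ℕ) (v : Fin n → ℕ) :
    LinearIndependent k
      (fun Γ : {Γ : Multiset (Fin n × Fin n) //
          (∀ e ∈ Γ, e.1 ≠ e.2) ∧ Noncrossing n Γ ∧ Upward n Γ ∧ valence n Γ = v} =>
        graphMonomial k n Γ.1) ∧
    Submodule.span k
      (Set.range (fun Γ : {Γ : Multiset (Fin n × Fin n) //
          (∀ e ∈ Γ, e.1 ≠ e.2) ∧ Noncrossing n Γ ∧ Upward n Γ ∧ valence n Γ = v} =>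
        graphMonomial k n Γ.1)) = Rv k n v := by
  exact stmt6_general k n v
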